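/- arXiv:1806.05200 — 2 statements merged into one kernel-verified Lean document; each statement's English description precedes it below -/
import Mathlib

section
/- For n ≥ 3, the Hilbert series of both S/I and S/in_<(I) equals (1 + n t + n t² + t³)/(1 − t)², where I is the join-meet ideal of the diamond lattice D_{n+2} and in_<(I) its initial ideal with respect to the reverse lexicographic order induced by x > y_1 > ⋯ > y_n > z. -/
open MvPolynomial

noncomputable def xP (K : Type*) [Field K] (n : ℕ) : MvPolynomial (Fin (n + 2)) K := X 0
noncomputable def zP (K : Type*) [Field K] (n : ℕ) : MvPolynomial (Fin (n + 2)) K :=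
  X (Fin.last (n + 1))
noncomputable def yP (K : Type*) [Field K] (n : ℕ) (i : Fin n) : MvPolynomial (Fin (n + 2)) K :=
  X i.succ.castSucc

/-- The join-meet ideal `I` of the diamond lattice `D_{n+2}`. -/
noncomputable def diamondIdeal (K : Type*) [Field K] (n : ℕ) :
    Ideal (MvPolynomial (Fin (n + 2)) K) :=
  Ideal.span {f | ∃ i j : Fin n, i < j ∧ f = yP K n i * yP K n j - xP K n * zP K n}

/-- The initial ideal `in_<(I)` of `I` w.r.t. the reverse lexicographic order induced by
`x > y_1 > ⋯ > y_n > z`, as computed in the paper: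
`(y_i y_j : i < j) + (x y_k z : k ≤ n-1) + (x y_n² z)`. -/
noncomputable def diamondIni (K : Type*) [Field K] (n : ℕ) (hn : 1 ≤ n) :
    Ideal (MvPolynomial (Fin (n + 2)) K) :=
  Ideal.span
    ({f | ∃ i j : Fin n, i < j ∧ f = yP K n i * yP K n j} ∪
      {f | ∃ k : Fin n, (k : ℕ) < n - 1 ∧ f = xP K n * yP K n k * zP K n} ∪
      {xP K n * (yP K n ⟨n - 1, by omega⟩) ^ 2 * zP K n})

/-- Hilbert function of `S/I` in degree `d`, i.e. `dim_K (S/I)_d = dim_K S_d/(I ∩ S_d)`. -/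
noncomputable def hilbFn (K : Type*) [Field K] {σ : Type*}
    (I : Ideal (MvPolynomial σ K)) (d : ℕ) : ℕ :=
  Module.finrank K
    ((homogeneousSubmodule σ K d) ⧸
      (Submodule.comap (homogeneousSubmodule σ K d).subtype (Submodule.restrictScalars K I)))

/-!
The quotients by `I` and by `in_<(I)` have a common basis, the monomials outside `in_<(I)`.

Modulo `I`, put `w = xz`, so that `y_i y_j = w` for all `i ≠ j`. Choosing `m ≠ k, l`, which is
possible as `n ≥ 3`, gives `w y_k = y_m y_l y_k = w y_l`, and hence `w y_l² = w y_m y_l = w²`.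
A monomial divisible by `xz` or by some `y_i y_j` is therefore congruent to a unique
`x^a y_n^ε z^b` with `ε ≤ 1`, determined by its degree and the difference of its `x`- and
`z`-exponents. The other monomials are alone in their residue classes.

The monomials outside `in_<(I)` are the disjoint union of the blocks `u · {v^p w^q}` with
`(u; v, w)` one of `(1; x, z)`, `(y_k; x, y_k)`, `(y_k z; y_k, z)`, `(x y_n z; x, z)`. A block
contributes `t^(deg u) / (1 - t)²` to the Hilbert series.
-/

section StandardBasis

variable {K σ : Type*} {B : Set (σ →₀ ℕ)}

theorem homogeneousSubmodule_le_restrictSupport_sup [CommRing K] {I : Ideal (MvPolynomial σ K)}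
    (hspan : ∀ m : σ →₀ ℕ, ∃ f ∈ restrictSupport K {u ∈ B | u.degree = m.degree},
      monomial m 1 - f ∈ I) (d : ℕ) :
    homogeneousSubmodule σ K d ≤
      restrictSupport K {u ∈ B | u.degree = d} ⊔ I.restrictScalars K := by
  have hS : homogeneousSubmodule σ K d = restrictSupport K {m | m.degree = d} :=
    homogeneousSubmodule_eq_finsupp_supported σ K d
  rw [hS, restrictSupport_eq_span, Submodule.span_le]
  rintro _ ⟨m, rfl, rfl⟩
  obtain ⟨f, hf, hmf⟩ := hspan m
  exact Submodule.mem_sup.2 ⟨f, hf, _, hmf, add_sub_cancel _ _⟩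

theorem hilbFn_eq_ncard [Field K] {I : Ideal (MvPolynomial σ K)}
    (hdisj : Disjoint (restrictSupport K B) (I.restrictScalars K))
    (hspan : ∀ m : σ →₀ ℕ, ∃ f ∈ restrictSupport K {u ∈ B | u.degree = m.degree},
      monomial m 1 - f ∈ I) (d : ℕ) :
    hilbFn K I d = {u ∈ B | u.degree = d}.ncard := by
  set V := restrictSupport K {u ∈ B | u.degree = d}
  have hVS : V ≤ homogeneousSubmodule σ K d :=
    (restrictSupport_mono K fun _ hu => hu.2).trans
      (homogeneousSubmodule_eq_finsupp_supported σ K d).ge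
  have hVB : V ≤ restrictSupport K B := restrictSupport_mono K fun _ hu => hu.1
  set Q := (I.restrictScalars K).comap (homogeneousSubmodule σ K d).subtype with hQ
  let φ : V →ₗ[K] homogeneousSubmodule σ K d ⧸ Q := Q.mkQ ∘ₗ Submodule.inclusion hVS
  have hφ_inj : Function.Injective φ := by
    refine (injective_iff_map_eq_zero φ).2 fun f hf => Subtype.ext ?_
    exact Submodule.disjoint_def.1 hdisj f (hVB f.2) ((Submodule.Quotient.mk_eq_zero Q).1 hf)
  have hφ_surj : Function.Surjective φ := by
    intro q
    obtain ⟨⟨f, hf⟩, rfl⟩ := Q.mkQ_surjective q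
    obtain ⟨g, hg, h, hh, rfl⟩ :=
      Submodule.mem_sup.1 (homogeneousSubmodule_le_restrictSupport_sup hspan d hf)
    refine ⟨⟨g, hg⟩, (Submodule.Quotient.eq Q).2 ?_⟩
    simpa [hQ] using hh
  calc hilbFn K I d = Module.finrank K V :=
        (LinearEquiv.ofBijective φ ⟨hφ_inj, hφ_surj⟩).finrank_eq.symm
    _ = {u ∈ B | u.degree = d}.ncard :=
        Module.finrank_eq_nat_card_basis (basisRestrictSupport K _)

theorem hilbFn_span_monomial [Field K] (G : Set (σ →₀ ℕ)) (d : ℕ) :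
    hilbFn K (Ideal.span ((fun u => monomial u (1 : K)) '' G)) d =
      {m ∈ {m : σ →₀ ℕ | ∀ u ∈ G, ¬ u ≤ m} | m.degree = d}.ncard := by
  refine hilbFn_eq_ncard ?_ (fun m => ?_) d
  · refine Submodule.disjoint_def.2 fun f hf hfI => support_eq_empty.1 ?_
    refine Finset.eq_empty_of_forall_notMem fun m hm => ?_
    obtain ⟨u, hu, hum⟩ := mem_ideal_span_monomial_image.1 hfI m hm
    exact (mem_restrictSupport_iff K).1 hf hm u hu hum
  · by_cases hm : ∀ u ∈ G, ¬ u ≤ m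
    · exact ⟨monomial m 1, by simpa using hm, by simp⟩
    · push Not at hm
      refine ⟨0, zero_mem _, mem_ideal_span_monomial_image.2 fun m' hm' => ?_⟩
      obtain rfl : m' = m := by simpa using support_monomial_subset (by simpa using hm')
      exact hm

end StandardBasis

section Binomial

variable {K σ : Type*} {E : Set ((σ →₀ ℕ) × (σ →₀ ℕ))} {N : (σ →₀ ℕ) → σ →₀ ℕ}

theorem map_eq_zero_of_mem_span {R M : Type*} [CommSemiring R] [AddCommMonoid M] [Module R M]
    {G : Set (MvPolynomial σ R)} {L : MvPolynomial σ R →ₗ[R] M}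
    (hG : ∀ g ∈ G, ∀ m, L (monomial m 1 * g) = 0) {f : MvPolynomial σ R}
    (hf : f ∈ Ideal.span G) : L f = 0 := by
  suffices ∀ h, L (h * f) = 0 by simpa using this 1
  induction hf using Submodule.span_induction with
  | mem g hg =>
    have hLg : L ∘ₗ LinearMap.mulRight R g = 0 :=
      (basisMonomials σ R).ext fun m => by simpa using hG g hg m
    exact LinearMap.congr_fun hLg
  | zero => simp
  | add a b _ _ ha hb => exact fun h => by rw [mul_add, map_add, ha, hb, add_zero]
  | smul r a _ ha => exact fun h => by rw [smul_eq_mul, ← mul_assoc, ha]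

theorem disjoint_restrictSupport_span_binomial [CommRing K]
    (hE : ∀ e ∈ E, ∀ m, N (m + e.1) = N (m + e.2)) :
    Disjoint (restrictSupport K {m | N m = m}) ((Ideal.span
      ((fun e => monomial e.1 (1 : K) - monomial e.2 1) '' E)).restrictScalars K) := by
  -- The linear extension of `N` kills the ideal but fixes the span of the monomials fixed by `N`.
  let L : MvPolynomial σ K →ₗ[K] MvPolynomial σ K :=
    (basisMonomials σ K).constr K fun m => monomial (N m) 1
  have hL (m : σ →₀ ℕ) : L (monomial m 1) = monomial (N m) 1 := by
    simpa using (basisMonomials σ K).constr_basis K (fun m => monomial (N m) 1) m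
  have hL_fix : Set.EqOn L (LinearMap.id (R := K)) (restrictSupport K {m | N m = m}) := by
    rw [restrictSupport_eq_span]
    refine LinearMap.eqOn_span' ?_
    rintro _ ⟨m, hm, rfl⟩
    simp only [hL, hm.out, LinearMap.id_apply]
  refine Submodule.disjoint_def.2 fun f hf hfI => (hL_fix hf).symm.trans ?_
  refine map_eq_zero_of_mem_span ?_ hfI
  rintro _ ⟨e, he, rfl⟩ m
  simp only [mul_sub, monomial_mul, one_mul, map_sub, hL, hE e he, sub_self]

theorem hilbFn_span_binomial [Field K]
    (hE : ∀ e ∈ E, ∀ m, N (m + e.1) = N (m + e.2)) (hN : ∀ m, N (N m) = N m)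
    (hdeg : ∀ m, (N m).degree = m.degree)
    (hmem : ∀ m, monomial m (1 : K) - monomial (N m) 1 ∈
      Ideal.span ((fun e => monomial e.1 (1 : K) - monomial e.2 1) '' E)) (d : ℕ) :
    hilbFn K (Ideal.span ((fun e => monomial e.1 (1 : K) - monomial e.2 1) '' E)) d =
      {m ∈ {m | N m = m} | m.degree = d}.ncard :=
  hilbFn_eq_ncard (disjoint_restrictSupport_span_binomial hE)
    (fun m => ⟨monomial (N m) 1, by simp [hN, hdeg], hmem m⟩) d

end Binomial

section StanleyDecomposition

variable {ι : Type*} [Fintype ι]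

theorem ncard_prod_nat_nat_fiber (k : ι → ℕ) (d : ℕ) :
    {x : ι × ℕ × ℕ | k x.1 + x.2.1 + x.2.2 = d}.ncard = ∑ j, (d + 1 - k j) := by
  let e : {x : ι × ℕ × ℕ | k x.1 + x.2.1 + x.2.2 = d} ≃ Σ j, Fin (d + 1 - k j) :=
    { toFun := fun ⟨(j, p, _), h⟩ => ⟨j, p, by simp only [Set.mem_ofPred_eq] at h; omega⟩
      invFun := fun ⟨j, p⟩ => ⟨(j, p, d - k j - p), by simp only [Set.mem_ofPred_eq]; omega⟩
      left_inv := fun ⟨(j, p, q), h⟩ => by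
        simp only [Set.mem_ofPred_eq] at h
        simp only [Subtype.mk.injEq, Prod.mk.injEq, true_and]
        omega
      right_inv := fun _ => rfl }
  rw [← Nat.card_coe_set_eq, Nat.card_congr e, Nat.card_eq_fintype_card, Fintype.card_sigma]
  simp only [Fintype.card_fin]

variable {R : Type*} [CommRing R]

theorem mk_add_one_sub_mul_one_sub_X_sq (k : ℕ) :
    (PowerSeries.mk fun d => ((d + 1 - k : ℕ) : R)) * (1 - PowerSeries.X) ^ 2 =
      PowerSeries.X ^ k := by
  have hshift : (PowerSeries.mk fun d => ((d + 1 - k : ℕ) : R)) =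
      PowerSeries.X ^ k * PowerSeries.mk 1 ^ 2 := by
    ext d
    rw [PowerSeries.mk_one_pow_eq_mk_choose_add, PowerSeries.coeff_X_pow_mul']
    simp only [PowerSeries.coeff_mk, Nat.choose_one_right]
    split_ifs with hk
    · congr 1; omega
    · rw [Nat.sub_eq_zero_of_le (by omega), Nat.cast_zero]
  rw [hshift, mul_assoc, ← mul_pow, PowerSeries.mk_one_mul_one_sub_eq_one, one_pow, mul_one]

theorem mk_ncard_range_mul_one_sub_X_sq {α : Type*} {deg : α → ℕ} {k : ι → ℕ}
    {φ : ι × ℕ × ℕ → α} (hφ : Function.Injective φ)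
    (hdeg : ∀ x, deg (φ x) = k x.1 + x.2.1 + x.2.2) :
    (PowerSeries.mk fun d => ({u ∈ Set.range φ | deg u = d}.ncard : R)) *
      (1 - PowerSeries.X) ^ 2 = ∑ j, PowerSeries.X ^ k j := by
  have hcard (d : ℕ) : {u ∈ Set.range φ | deg u = d}.ncard = ∑ j, (d + 1 - k j) := by
    have himage : {u ∈ Set.range φ | deg u = d} =
        φ '' {x | k x.1 + x.2.1 + x.2.2 = d} := by
      ext u
      constructor
      · rintro ⟨⟨x, rfl⟩, hx⟩
        exact ⟨x, (hdeg x).symm.trans hx, rfl⟩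
      · rintro ⟨x, hx, rfl⟩
        exact ⟨⟨x, rfl⟩, (hdeg x).trans hx⟩
    rw [himage, Set.ncard_image_of_injective _ hφ, ncard_prod_nat_nat_fiber]
  have hsum : (PowerSeries.mk fun d => ({u ∈ Set.range φ | deg u = d}.ncard : R)) =
      ∑ j, PowerSeries.mk fun d => ((d + 1 - k j : ℕ) : R) := by
    ext d
    simp only [map_sum, PowerSeries.coeff_mk, hcard, Nat.cast_sum]
  simp only [hsum, Finset.sum_mul, mk_add_one_sub_mul_one_sub_X_sq]

end StanleyDecomposition

section ConstantProducts

variable {ι M : Type*} [CommMonoid M] {w : M} {y : ι → M}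

theorem mul_apply_eq_mul_apply_of_pairwise (hι : ∀ k l : ι, ∃ m, m ≠ k ∧ m ≠ l)
    (hy : Pairwise fun i j => y i * y j = w) (k l : ι) : w * y k = w * y l := by
  obtain ⟨m, hmk, hml⟩ := hι k l
  calc w * y k = y m * y l * y k := by rw [hy hml]
    _ = y m * y k * y l := mul_right_comm ..
    _ = w * y l := by rw [hy hmk]

theorem mul_apply_pow_eq_mul_apply_pow_of_pairwise (hι : ∀ k l : ι, ∃ m, m ≠ k ∧ m ≠ l)
    (hy : Pairwise fun i j => y i * y j = w) (k l : ι) (e : ℕ) : w * y k ^ e = w * y l ^ e := by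
  induction e with
  | zero => simp only [pow_zero]
  | succ e ih =>
    calc w * y k ^ (e + 1) = w * y k ^ e * y k := by rw [pow_succ, mul_assoc]
      _ = w * y k * y l ^ e := by rw [ih, mul_right_comm]
      _ = w * y l ^ (e + 1) := by
        rw [mul_apply_eq_mul_apply_of_pairwise hι hy k l, mul_assoc, ← pow_succ']

theorem mul_sq_of_pairwise (hι : ∀ k l : ι, ∃ m, m ≠ k ∧ m ≠ l)
    (hy : Pairwise fun i j => y i * y j = w) (l : ι) : w * y l ^ 2 = w ^ 2 := by
  obtain ⟨m, hml, -⟩ := hι l l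
  calc w * y l ^ 2 = w * y l * y l := by rw [pow_two, mul_assoc]
    _ = w * y m * y l := by rw [mul_apply_eq_mul_apply_of_pairwise hι hy l m]
    _ = w ^ 2 := by rw [mul_assoc, hy hml, pow_two]

theorem mul_pow_of_pairwise (hι : ∀ k l : ι, ∃ m, m ≠ k ∧ m ≠ l)
    (hy : Pairwise fun i j => y i * y j = w) (l : ι) (s : ℕ) :
    w * y l ^ s = w ^ (s / 2 + 1) * y l ^ (s % 2) := by
  have heven (e : ℕ) : w * (y l ^ 2) ^ e = w ^ (e + 1) := by
    induction e with
    | zero => simp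
    | succ e ih =>
      rw [pow_succ, ← mul_assoc, ih, pow_succ, mul_assoc, mul_sq_of_pairwise hι hy, ← pow_add]
  conv_lhs => rw [← Nat.div_add_mod s 2, pow_add, pow_mul, ← mul_assoc, heven]

theorem mul_finsuppProd_of_pairwise (hι : ∀ k l : ι, ∃ m, m ≠ k ∧ m ≠ l)
    (hy : Pairwise fun i j => y i * y j = w) (l : ι) (c : ι →₀ ℕ) :
    w * c.prod (fun i e => y i ^ e) = w ^ (c.degree / 2 + 1) * y l ^ (c.degree % 2) := by
  rw [← mul_pow_of_pairwise hι hy]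
  induction c using Finsupp.induction_linear with
  | zero => simp
  | add c c' ih ih' =>
    rw [Finsupp.prod_add_index' (fun _ => pow_zero _) (fun _ => pow_add _), ← mul_assoc, ih,
      mul_right_comm, ih', map_add, pow_add, mul_right_comm, mul_assoc]
  | single i e =>
    simpa [Finsupp.prod_single_index] using mul_apply_pow_eq_mul_apply_pow_of_pairwise hι hy i l e

end ConstantProducts

section DiamondExponents

variable {n : ℕ}

/-- The exponent vector of the monomial `x ^ a * y ^ c * z ^ b`, where `c` is the exponent vector
of the `y`-part. -/
noncomputable def diamondExp (a : ℕ) (c : Fin n →₀ ℕ) (b : ℕ) : Fin (n + 2) →₀ ℕ :=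
  Finsupp.equivFunOnFinite.symm (Fin.snoc (α := fun _ => ℕ) (Finsupp.cons a c) b)

theorem diamondExp_zero (a : ℕ) (c : Fin n →₀ ℕ) (b : ℕ) : diamondExp a c b 0 = a := by
  rw [← Fin.castSucc_zero]
  simp [diamondExp, -Fin.castSucc_zero]

theorem diamondExp_castSucc_succ (a : ℕ) (c : Fin n →₀ ℕ) (b : ℕ) (i : Fin n) :
    diamondExp a c b i.succ.castSucc = c i := by
  simp [diamondExp, -Fin.castSucc_succ]

theorem diamondExp_last (a : ℕ) (c : Fin n →₀ ℕ) (b : ℕ) :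
    diamondExp a c b (Fin.last (n + 1)) = b := by
  simp [diamondExp]

theorem forall_fin_add_two_iff {p : Fin (n + 2) → Prop} :
    (∀ i, p i) ↔ p 0 ∧ (∀ i : Fin n, p i.succ.castSucc) ∧ p (Fin.last (n + 1)) := by
  rw [Fin.forall_fin_succ', Fin.forall_fin_succ, and_assoc, Fin.castSucc_zero]

theorem exists_diamondExp_eq (m : Fin (n + 2) →₀ ℕ) : ∃ a c b, m = diamondExp a c b := by
  refine ⟨m 0, Finsupp.equivFunOnFinite.symm fun i => m i.succ.castSucc, m (Fin.last (n + 1)),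
    Finsupp.ext (forall_fin_add_two_iff.2 ?_)⟩
  simp only [diamondExp_zero, diamondExp_castSucc_succ, diamondExp_last,
    Finsupp.equivFunOnFinite_symm_apply_apply, implies_true, and_self]

theorem diamondExp_inj {a a' b b' : ℕ} {c c' : Fin n →₀ ℕ} :
    diamondExp a c b = diamondExp a' c' b' ↔ a = a' ∧ c = c' ∧ b = b' := by
  simp only [Finsupp.ext_iff, forall_fin_add_two_iff (n := n), diamondExp_zero,
    diamondExp_castSucc_succ, diamondExp_last]

theorem diamondExp_le_diamondExp {a a' b b' : ℕ} {c c' : Fin n →₀ ℕ} :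
    diamondExp a c b ≤ diamondExp a' c' b' ↔ a ≤ a' ∧ c ≤ c' ∧ b ≤ b' := by
  simp only [Finsupp.le_def, forall_fin_add_two_iff (n := n), diamondExp_zero,
    diamondExp_castSucc_succ, diamondExp_last]

theorem diamondExp_add (a a' b b' : ℕ) (c c' : Fin n →₀ ℕ) :
    diamondExp a c b + diamondExp a' c' b' = diamondExp (a + a') (c + c') (b + b') := by
  simp only [Finsupp.ext_iff, forall_fin_add_two_iff (n := n), Finsupp.add_apply, diamondExp_zero,
    diamondExp_castSucc_succ, diamondExp_last, implies_true, and_self]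

theorem degree_diamondExp (a : ℕ) (c : Fin n →₀ ℕ) (b : ℕ) :
    (diamondExp a c b).degree = a + c.degree + b := by
  simp only [Finsupp.degree_eq_sum, Fin.sum_univ_castSucc (n := n + 1), Fin.sum_univ_succ (n := n),
    Fin.castSucc_zero, diamondExp_zero, diamondExp_castSucc_succ, diamondExp_last]

theorem monomial_diamondExp (K : Type*) [Field K] (a : ℕ) (c : Fin n →₀ ℕ) (b : ℕ) :
    monomial (diamondExp a c b) (1 : K) =
      xP K n ^ a * c.prod (fun i e => yP K n i ^ e) * zP K n ^ b := by
  rw [monomial_eq, map_one, one_mul, Finsupp.prod_fintype _ _ fun _ => pow_zero _,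
    Finsupp.prod_fintype _ _ fun _ => pow_zero _, Fin.prod_univ_castSucc, Fin.prod_univ_succ]
  simp only [Fin.castSucc_zero, diamondExp_zero, diamondExp_castSucc_succ, diamondExp_last,
    xP, yP, zP]

/-- The exponent vector of `x * z`. -/
noncomputable def xzExp (n : ℕ) : Fin (n + 2) →₀ ℕ := diamondExp 1 0 1

/-- The exponent vector of `y_i * y_j`. -/
noncomputable def yyExp (i j : Fin n) : Fin (n + 2) →₀ ℕ :=
  diamondExp 0 (Finsupp.single i 1 + Finsupp.single j 1) 0

/-- The exponent vector of `x * y_k ^ e * z`. -/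
noncomputable def xyzExp (k : Fin n) (e : ℕ) : Fin (n + 2) →₀ ℕ :=
  diamondExp 1 (Finsupp.single k e) 1

theorem monomial_xzExp (K : Type*) [Field K] :
    monomial (xzExp n) (1 : K) = xP K n * zP K n := by
  simp [xzExp, monomial_diamondExp]

theorem monomial_yyExp (K : Type*) [Field K] (i j : Fin n) :
    monomial (yyExp i j) (1 : K) = yP K n i * yP K n j := by
  rw [yyExp, monomial_diamondExp,
    Finsupp.prod_add_index' (fun _ => pow_zero _) (fun _ => pow_add _)]
  simp

theorem monomial_xyzExp (K : Type*) [Field K] (k : Fin n) (e : ℕ) :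
    monomial (xyzExp k e) (1 : K) = xP K n * yP K n k ^ e * zP K n := by
  simp [xyzExp, monomial_diamondExp]

theorem single_add_single_le_iff {σ : Type*} {i j : σ} (hij : i ≠ j) {c : σ →₀ ℕ} :
    Finsupp.single i 1 + Finsupp.single j 1 ≤ c ↔ c i ≠ 0 ∧ c j ≠ 0 := by
  classical
  simp only [Finsupp.le_def, Finsupp.add_apply, Finsupp.single_apply]
  refine ⟨fun h => ⟨?_, ?_⟩, fun h k => ?_⟩
  · grind [h i]
  · grind [h j]
  · grind

theorem yyExp_le_diamondExp_iff {i j : Fin n} (hij : i ≠ j) {a b : ℕ} {c : Fin n →₀ ℕ} :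
    yyExp i j ≤ diamondExp a c b ↔ c i ≠ 0 ∧ c j ≠ 0 := by
  simp [yyExp, diamondExp_le_diamondExp, single_add_single_le_iff hij]

end DiamondExponents

section StandardMonomials

variable {n : ℕ} {l : Fin n}

/-- The exponent vectors of the generators of `in_<(I)`, where `y_l` is the smallest of the
variables `y_1, …, y_n`. -/
def iniExp (l : Fin n) : Set (Fin (n + 2) →₀ ℕ) :=
  {u | ∃ i j, i < j ∧ u = yyExp i j} ∪ {u | ∃ k ≠ l, u = xyzExp k 1} ∪ {xyzExp l 2}

/-- The exponent vectors of the standard monomials, those outside `in_<(I)`, where `y_l` is the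
smallest of the variables `y_1, …, y_n`. -/
def standardExp (l : Fin n) : Set (Fin (n + 2) →₀ ℕ) :=
  {m | ∀ u ∈ iniExp l, ¬ u ≤ m}

theorem diamondIni_eq_span_monomial (K : Type*) [Field K] (hn : 1 ≤ n) :
    diamondIni K n hn = Ideal.span
      ((fun u => monomial u (1 : K)) '' iniExp (⟨n - 1, by omega⟩ : Fin n)) := by
  have hlast (k : Fin n) : (k : ℕ) < n - 1 ↔ k ≠ ⟨n - 1, by omega⟩ := by
    rw [Ne, Fin.ext_iff]
    dsimp only
    omega
  simp only [diamondIni, iniExp, hlast, Set.image_union, Set.image_singleton, monomial_xyzExp]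
  congr 3
  · ext f
    simp only [← monomial_yyExp]
    constructor
    · rintro ⟨i, j, hij, rfl⟩
      exact ⟨_, ⟨i, j, hij, rfl⟩, rfl⟩
    · rintro ⟨_, ⟨i, j, hij, rfl⟩, rfl⟩
      exact ⟨i, j, hij, rfl⟩
  · ext f
    constructor
    · rintro ⟨k, hk, rfl⟩
      exact ⟨_, ⟨k, hk, rfl⟩, by simp only [monomial_xyzExp, pow_one]⟩
    · rintro ⟨_, ⟨k, hk, rfl⟩, rfl⟩
      exact ⟨k, hk, by simp only [monomial_xyzExp, pow_one]⟩

theorem diamondExp_mem_standardExp {a b : ℕ} {c : Fin n →₀ ℕ} :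
    diamondExp a c b ∈ standardExp l ↔
      (∀ i j, i < j → c i = 0 ∨ c j = 0) ∧ (∀ k ≠ l, a = 0 ∨ c k = 0 ∨ b = 0) ∧
        (a = 0 ∨ c l ≤ 1 ∨ b = 0) := by
  have hyy : (∀ u ∈ {u | ∃ i j : Fin n, i < j ∧ u = yyExp i j}, ¬ u ≤ diamondExp a c b) ↔
      ∀ i j, i < j → c i = 0 ∨ c j = 0 := by
    constructor
    · intro h i j hij
      simpa [yyExp_le_diamondExp_iff hij.ne, imp_iff_not_or] using h _ ⟨i, j, hij, rfl⟩
    · rintro h _ ⟨i, j, hij, rfl⟩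
      simpa [yyExp_le_diamondExp_iff hij.ne, imp_iff_not_or] using h i j hij
  have hxyz (k : Fin n) (e : ℕ) :
      ¬ xyzExp k e ≤ diamondExp a c b ↔ a = 0 ∨ c k < e ∨ b = 0 := by
    rw [xyzExp, diamondExp_le_diamondExp, Finsupp.single_le_iff]
    omega
  constructor
  · refine fun h => ⟨hyy.1 fun u hu => h u (.inl (.inl hu)), fun k hk => ?_, ?_⟩
    · simpa using (hxyz k 1).1 (h _ (.inl (.inr ⟨k, hk, rfl⟩)))
    · simpa [Nat.lt_succ_iff] using (hxyz l 2).1 (h _ (.inr rfl))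
  · rintro ⟨hc, hk, hl⟩ u ((hu | ⟨k, hkl, rfl⟩) | rfl)
    · exact hyy.2 hc u hu
    · exact (hxyz k 1).2 (by simpa using hk k hkl)
    · exact (hxyz l 2).2 (by simpa [Nat.lt_succ_iff] using hl)

/-- The Stanley decomposition of the span of the standard monomials. With `p, q` ranging over `ℕ`,
the four kinds of blocks consist of the monomials `x ^ p * z ^ q`, `y_k * x ^ p * y_k ^ q`,
`y_k * z * y_k ^ p * z ^ q` and `x * y_l * z * x ^ p * z ^ q`. -/
noncomputable def stanleyExp (l : Fin n) :
    (Unit ⊕ Fin n ⊕ Fin n ⊕ Unit) × ℕ × ℕ → Fin (n + 2) →₀ ℕ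
  | (.inl _, p, q) => diamondExp p 0 q
  | (.inr (.inl k), p, q) => diamondExp p (Finsupp.single k (q + 1)) 0
  | (.inr (.inr (.inl k)), p, q) => diamondExp 0 (Finsupp.single k (p + 1)) (q + 1)
  | (.inr (.inr (.inr _)), p, q) => diamondExp (p + 1) (Finsupp.single l 1) (q + 1)

/-- The degree of the first monomial `1`, `y_k`, `y_k * z` or `x * y_l * z` of a block of
`stanleyExp`. -/
def stanleyShift : Unit ⊕ Fin n ⊕ Fin n ⊕ Unit → ℕ
  | .inl _ => 0
  | .inr (.inl _) => 1
  | .inr (.inr (.inl _)) => 2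
  | .inr (.inr (.inr _)) => 3

theorem degree_stanleyExp (x : (Unit ⊕ Fin n ⊕ Fin n ⊕ Unit) × ℕ × ℕ) :
    (stanleyExp l x).degree = stanleyShift x.1 + x.2.1 + x.2.2 := by
  rcases x with ⟨_ | _ | _ | _, p, q⟩ <;>
    simp only [stanleyExp, stanleyShift, degree_diamondExp, Finsupp.degree_single, map_zero] <;>
    omega

theorem stanleyExp_injective : Function.Injective (stanleyExp l) := by
  rintro ⟨_ | k | k | _, p, q⟩ ⟨_ | k' | k' | _, p', q'⟩ h <;>
    simp only [stanleyExp, diamondExp_inj, Finsupp.single_eq_single_iff, Finsupp.single_eq_zero,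
      eq_comm (a := (0 : Fin n →₀ ℕ))] at h <;>
    grind

theorem eq_zero_or_eq_single_succ {ι : Type*} [LinearOrder ι] {c : ι →₀ ℕ}
    (hc : ∀ i j, i < j → c i = 0 ∨ c j = 0) :
    c = 0 ∨ ∃ k e, c = Finsupp.single k (e + 1) := by
  refine or_iff_not_imp_left.2 fun hc0 => ?_
  obtain ⟨k, hk⟩ := Finsupp.ne_iff.1 hc0
  obtain ⟨e, he⟩ := Nat.exists_eq_succ_of_ne_zero hk
  refine ⟨k, e, Finsupp.ext fun i => ?_⟩
  rcases lt_trichotomy i k with hik | rfl | hki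
  · simpa [hik.ne'] using (hc i k hik).resolve_right hk
  · simpa using he
  · simpa [hki.ne] using (hc k i hki).resolve_left hk

theorem single_apply_eq_zero_or {ι : Type*} (k : ι) (e : ℕ) {i j : ι} (hij : i ≠ j) :
    Finsupp.single k e i = 0 ∨ Finsupp.single k e j = 0 := by
  classical grind

theorem range_stanleyExp : Set.range (stanleyExp l) = standardExp l := by
  refine Set.Subset.antisymm (Set.range_subset_iff.2 ?_) fun m hm => ?_
  · rintro ⟨_ | k | k | _, p, q⟩ <;> refine diamondExp_mem_standardExp.2 ⟨?_, ?_, ?_⟩ <;>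
      simp +contextual [single_apply_eq_zero_or, ne_of_lt, -Finsupp.single_add]
  · obtain ⟨a, c, b, rfl⟩ := exists_diamondExp_eq m
    obtain ⟨hyy, hxyz, hxyyz⟩ := diamondExp_mem_standardExp.1 hm
    rcases eq_zero_or_eq_single_succ hyy with rfl | ⟨k, e, rfl⟩
    · exact ⟨(.inl (), a, b), rfl⟩
    · rcases b with _ | b
      · exact ⟨(.inr (.inl k), a, e), rfl⟩
      rcases a with _ | a
      · exact ⟨(.inr (.inr (.inl k)), e, b), rfl⟩
      obtain rfl : k = l := by
        by_contra hkl
        simpa using hxyz k hkl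
      obtain rfl : e = 0 := by simpa using hxyyz
      exact ⟨(.inr (.inr (.inr ())), a, b), rfl⟩

theorem mk_ncard_standardExp_mul_one_sub_X_sq {R : Type*} [CommRing R] (l : Fin n) :
    (PowerSeries.mk fun d => ({m ∈ standardExp l | m.degree = d}.ncard : R)) *
        (1 - PowerSeries.X) ^ 2 =
      1 + (n : PowerSeries R) * PowerSeries.X + (n : PowerSeries R) * PowerSeries.X ^ 2 +
        PowerSeries.X ^ 3 := by
  rw [← range_stanleyExp, mk_ncard_range_mul_one_sub_X_sq stanleyExp_injective degree_stanleyExp]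
  simp [stanleyShift, add_assoc]

end StandardMonomials

section NormalForm

variable {n : ℕ} {l : Fin n} {m m' : Fin (n + 2) →₀ ℕ}

/-- Divisibility of the monomial with exponent vector `m` by `x * z` or by some `y_i * y_j`. -/
def IsMixed (m : Fin (n + 2) →₀ ℕ) : Prop :=
  xzExp n ≤ m ∨ ∃ i j, i < j ∧ yyExp i j ≤ m

/-- The monomial `x ^ a * y_l ^ ε * z ^ b` with `ε ≤ 1` which has the same degree and the same
difference of `x`- and `z`-exponents as the given monomial. -/
noncomputable def collapse (l : Fin n) (m : Fin (n + 2) →₀ ℕ) : Fin (n + 2) →₀ ℕ :=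
  let s := ∑ i : Fin n, m i.succ.castSucc
  diamondExp (m 0 + s / 2) (Finsupp.single l (s % 2)) (m (Fin.last (n + 1)) + s / 2)

open Classical in
/-- The normal form of a monomial modulo the join-meet ideal. Monomials which are not mixed are
alone in their residue class. -/
noncomputable def normalForm (l : Fin n) (m : Fin (n + 2) →₀ ℕ) : Fin (n + 2) →₀ ℕ :=
  if IsMixed m then collapse l m else m

theorem IsMixed.mono (hm : IsMixed m) (h : m ≤ m') : IsMixed m' :=
  hm.imp (fun hxz => hxz.trans h) fun ⟨i, j, hij, hyy⟩ => ⟨i, j, hij, hyy.trans h⟩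

theorem isMixed_of_mem_iniExp (hm : m ∈ iniExp l) : IsMixed m := by
  have hxyz (k : Fin n) (e : ℕ) : IsMixed (xyzExp k e) :=
    .inl (diamondExp_le_diamondExp.2 ⟨le_rfl, zero_le, le_rfl⟩)
  rcases hm with (⟨i, j, hij, rfl⟩ | ⟨k, -, rfl⟩) | rfl
  · exact .inr ⟨i, j, hij, le_rfl⟩
  · exact hxyz k 1
  · exact hxyz l 2

theorem collapse_diamondExp (l : Fin n) (a : ℕ) (c : Fin n →₀ ℕ) (b : ℕ) :
    collapse l (diamondExp a c b) =
      diamondExp (a + c.degree / 2) (Finsupp.single l (c.degree % 2)) (b + c.degree / 2) := by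
  simp only [collapse, diamondExp_zero, diamondExp_castSucc_succ, diamondExp_last,
    Finsupp.degree_eq_sum]

theorem degree_collapse : (collapse l m).degree = m.degree := by
  obtain ⟨a, c, b, rfl⟩ := exists_diamondExp_eq m
  rw [collapse_diamondExp, degree_diamondExp, degree_diamondExp, Finsupp.degree_single]
  omega

theorem collapse_mem_standardExp : collapse l m ∈ standardExp l := by
  refine diamondExp_mem_standardExp.2
    ⟨fun i j hij => single_apply_eq_zero_or _ _ hij.ne, fun k hk => ?_, ?_⟩
  · simp [hk]
  · simp only [Finsupp.single_eq_same]
    omega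

theorem collapse_add_yyExp (l i j : Fin n) (m : Fin (n + 2) →₀ ℕ) :
    collapse l (m + yyExp i j) = collapse l (m + xzExp n) := by
  obtain ⟨a, c, b, rfl⟩ := exists_diamondExp_eq m
  simp only [yyExp, xzExp, diamondExp_add, collapse_diamondExp, map_add, Finsupp.degree_single,
    map_zero, diamondExp_inj]
  refine ⟨by omega, ?_, by omega⟩
  congr 1
  omega

theorem IsMixed.xzExp_le (hmixed : IsMixed m) (hm : m ∈ standardExp l) : xzExp n ≤ m :=
  hmixed.resolve_right fun ⟨i, j, hij, hyy⟩ => hm _ (.inl (.inl ⟨i, j, hij, rfl⟩)) hyy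

theorem collapse_eq_self (hm : m ∈ standardExp l) (hmixed : IsMixed m) : collapse l m = m := by
  have hxz := hmixed.xzExp_le hm
  rw [← range_stanleyExp] at hm
  obtain ⟨⟨_ | k | k | _, p, q⟩, rfl⟩ := hm <;>
    simp only [stanleyExp, xzExp, diamondExp_le_diamondExp] at hxz ⊢
  · simp [collapse_diamondExp]
  · omega
  · omega
  · simp [collapse_diamondExp]

theorem normalForm_mem_standardExp : normalForm l m ∈ standardExp l := by
  unfold normalForm
  split_ifs with hm
  · exact collapse_mem_standardExp
  · exact fun u hu hum => hm ((isMixed_of_mem_iniExp hu).mono hum)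

theorem normalForm_eq_self_iff : normalForm l m = m ↔ m ∈ standardExp l := by
  refine ⟨fun h => h ▸ normalForm_mem_standardExp, fun hm => ?_⟩
  unfold normalForm
  split_ifs with hmixed
  · exact collapse_eq_self hm hmixed
  · rfl

theorem degree_normalForm : (normalForm l m).degree = m.degree := by
  unfold normalForm
  split_ifs
  · exact degree_collapse
  · rfl

end NormalForm

section JoinMeetIdeal

variable {K : Type*} [Field K] {n : ℕ}

/-- The pairs of exponent vectors of `y_i * y_j` and `x * z`, for `i < j`, which index the binomial
generators of the join-meet ideal. -/
def diamondRel (n : ℕ) : Set ((Fin (n + 2) →₀ ℕ) × (Fin (n + 2) →₀ ℕ)) :=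
  {e | ∃ i j, i < j ∧ e = (yyExp i j, xzExp n)}

theorem diamondIdeal_eq_span_binomial :
    diamondIdeal K n = Ideal.span
      ((fun e => monomial e.1 (1 : K) - monomial e.2 1) '' diamondRel n) := by
  simp only [diamondIdeal, ← monomial_yyExp, ← monomial_xzExp]
  congr 1
  ext f
  constructor
  · rintro ⟨i, j, hij, rfl⟩
    exact ⟨_, ⟨i, j, hij, rfl⟩, rfl⟩
  · rintro ⟨_, ⟨i, j, hij, rfl⟩, rfl⟩
    exact ⟨i, j, hij, rfl⟩

theorem normalForm_add_eq_of_mem_diamondRel (l : Fin n)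
    {e : (Fin (n + 2) →₀ ℕ) × (Fin (n + 2) →₀ ℕ)} (he : e ∈ diamondRel n)
    (m : Fin (n + 2) →₀ ℕ) : normalForm l (m + e.1) = normalForm l (m + e.2) := by
  obtain ⟨i, j, hij, rfl⟩ := he
  have hyy : IsMixed (m + yyExp i j) := .inr ⟨i, j, hij, le_add_self⟩
  have hxz : IsMixed (m + xzExp n) := .inl le_add_self
  simp only [normalForm, if_pos hyy, if_pos hxz, collapse_add_yyExp]

theorem pairwise_mk_yP_mul_mk_yP :
    Pairwise fun i j : Fin n => Ideal.Quotient.mk (diamondIdeal K n) (yP K n i) *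
      Ideal.Quotient.mk (diamondIdeal K n) (yP K n j) =
        Ideal.Quotient.mk (diamondIdeal K n) (xP K n * zP K n) := by
  have hlt {i j : Fin n} (hij : i < j) :
      Ideal.Quotient.mk (diamondIdeal K n) (yP K n i * yP K n j) =
        Ideal.Quotient.mk (diamondIdeal K n) (xP K n * zP K n) :=
    Ideal.Quotient.eq.2 (Ideal.subset_span ⟨i, j, hij, rfl⟩)
  intro i j hij
  rw [← map_mul]
  rcases hij.lt_or_gt with h | h
  · exact hlt h
  · rw [mul_comm, hlt h]

theorem mk_monomial_add_xzExp (hn : 2 < n) (l : Fin n) (m : Fin (n + 2) →₀ ℕ) :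
    Ideal.Quotient.mk (diamondIdeal K n) (monomial (m + xzExp n) 1) =
      Ideal.Quotient.mk (diamondIdeal K n) (monomial (collapse l (m + xzExp n)) 1) := by
  obtain ⟨a, c, b, rfl⟩ := exists_diamondExp_eq m
  have hprod := mul_finsuppProd_of_pairwise
    (fun k l => Fin.exists_ne_and_ne_of_two_lt k l hn) (pairwise_mk_yP_mul_mk_yP (K := K)) l c
  have hsingle (e : ℕ) : (Finsupp.single l e).prod (fun i e => yP K n i ^ e) = yP K n l ^ e :=
    Finsupp.prod_single_index (pow_zero _)
  simp only [xzExp, diamondExp_add, collapse_diamondExp, monomial_diamondExp, add_zero, hsingle,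
    map_mul, map_pow, map_finsuppProd] at hprod ⊢
  linear_combination Ideal.Quotient.mk (diamondIdeal K n) (xP K n) ^ a *
    Ideal.Quotient.mk (diamondIdeal K n) (zP K n) ^ b * hprod

theorem mk_monomial_collapse (hn : 2 < n) (l : Fin n) {m : Fin (n + 2) →₀ ℕ} (hm : IsMixed m) :
    Ideal.Quotient.mk (diamondIdeal K n) (monomial m 1) =
      Ideal.Quotient.mk (diamondIdeal K n) (monomial (collapse l m) 1) := by
  rcases hm with hxz | ⟨i, j, hij, hyy⟩
  · obtain ⟨r, rfl⟩ := exists_add_of_le hxz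
    rw [add_comm (xzExp n), mk_monomial_add_xzExp hn l]
  · obtain ⟨r, rfl⟩ := exists_add_of_le hyy
    have hyx : monomial (yyExp i j) (1 : K) - monomial (xzExp n) 1 ∈ diamondIdeal K n := by
      rw [monomial_yyExp, monomial_xzExp]
      exact Ideal.subset_span ⟨i, j, hij, rfl⟩
    calc Ideal.Quotient.mk (diamondIdeal K n) (monomial (yyExp i j + r) 1)
      _ = Ideal.Quotient.mk (diamondIdeal K n) (monomial (r + xzExp n) 1) := by
        refine Ideal.Quotient.eq.2 ?_
        simpa [mul_sub, monomial_mul, add_comm] using Ideal.mul_mem_left _ (monomial r 1) hyx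
      _ = Ideal.Quotient.mk (diamondIdeal K n) (monomial (collapse l (yyExp i j + r)) 1) := by
        rw [mk_monomial_add_xzExp hn l, add_comm (yyExp i j), collapse_add_yyExp]

theorem monomial_sub_monomial_normalForm_mem (hn : 2 < n) (l : Fin n) (m : Fin (n + 2) →₀ ℕ) :
    monomial m (1 : K) - monomial (normalForm l m) 1 ∈ diamondIdeal K n := by
  unfold normalForm
  split_ifs with hm
  · exact Ideal.Quotient.eq.1 (mk_monomial_collapse hn l hm)
  · rw [sub_self]
    exact zero_mem _

end JoinMeetIdeal

theorem hilbFn_diamondIdeal {K : Type*} [Field K] {n : ℕ} (hn : 2 < n) (l : Fin n) (d : ℕ) :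
    hilbFn K (diamondIdeal K n) d = {m ∈ standardExp l | m.degree = d}.ncard := by
  have hfixed : {m | normalForm l m = m} = standardExp l :=
    Set.ext fun _ => normalForm_eq_self_iff
  rw [diamondIdeal_eq_span_binomial, hilbFn_span_binomial
    (fun _ he => normalForm_add_eq_of_mem_diamondRel l he)
    (fun _ => normalForm_eq_self_iff.2 normalForm_mem_standardExp) (fun _ => degree_normalForm)
    (fun m => diamondIdeal_eq_span_binomial (K := K) ▸
      monomial_sub_monomial_normalForm_mem hn l m), hfixed]

theorem hilbFn_diamondIni {K : Type*} [Field K] {n : ℕ} (hn : 1 ≤ n) (d : ℕ) :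
    hilbFn K (diamondIni K n hn) d =
      {m ∈ standardExp (⟨n - 1, by omega⟩ : Fin n) | m.degree = d}.ncard := by
  rw [diamondIni_eq_span_monomial, hilbFn_span_monomial, standardExp]

theorem hilbert_series_of_diamond (K : Type*) [Field K] (n : ℕ) (hn : 3 ≤ n) :
    (PowerSeries.mk fun d => (hilbFn K (diamondIdeal K n) d : ℚ)) *
        (1 - PowerSeries.X) ^ 2 =
      1 + (n : PowerSeries ℚ) * PowerSeries.X + (n : PowerSeries ℚ) * PowerSeries.X ^ 2 +
        PowerSeries.X ^ 3 ∧
    (PowerSeries.mk fun d => (hilbFn K (diamondIni K n (by omega)) d : ℚ)) *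
        (1 - PowerSeries.X) ^ 2 =
      1 + (n : PowerSeries ℚ) * PowerSeries.X + (n : PowerSeries ℚ) * PowerSeries.X ^ 2 +
        PowerSeries.X ^ 3 := by
  simp only [hilbFn_diamondIdeal hn ⟨n - 1, by omega⟩, hilbFn_diamondIni,
    mk_ncard_standardExp_mul_one_sub_X_sq, and_self]
end

section
/- For n ≥ 3, both quotient rings S/I and S/in_<(I) are Cohen-Macaulay of Krull dimension 2, where I is the join-meet ideal of the diamond lattice D_{n+2} and in_<(I) its initial ideal with respect to the reverse lexicographic order induced by x > y_1 > ⋯ > y_n > z. -/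
open MvPolynomial

/-- `f` is a regular sequence: each `f k` is a nonzerodivisor modulo the previous ones
(elementwise colon characterization) and the sequence generates a proper ideal. -/
def IsRegSeq {R : Type*} [CommRing R] {m : ℕ} (f : Fin m → R) : Prop :=
  (∀ k : Fin m, ∀ s : R,
      f k * s ∈ Ideal.span (f '' {j | j < k}) → s ∈ Ideal.span (f '' {j | j < k})) ∧
    Ideal.span (Set.range f) ≠ ⊤

/-- A graded quotient `S/I` is Cohen–Macaulay of dimension `m` iff its Krull dimension is `m`
and there is a regular sequence of length `m` inside the graded maximal ideal. -/
def IsCMofDim {K : Type*} [Field K] {σ : Type*} (I : Ideal (MvPolynomial σ K)) (m : ℕ) :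
    Prop :=
  ringKrullDim (MvPolynomial σ K ⧸ I) = m ∧
    ∃ f : Fin m → (MvPolynomial σ K ⧸ I),
      (∀ i, f i ∈ Ideal.map (Ideal.Quotient.mk I)
        (Ideal.span (Set.range (X : σ → MvPolynomial σ K)))) ∧
      IsRegSeq f

/-!
Let `J` be `I` or `in_<(I)`. If `S/(J : g)` and `S/(J + (g))` are Cohen–Macaulay with the same
system of parameters, then so is `S/J`, by the exact sequence
`0 → S/(J : g) → S/J → S/(J + (g)) → 0`. For `g = xz` the ideal `J + (xz)` is generated in both
cases by `xz` and the products `y_i y_j`, `i ≠ j`. It defines the union of the `n` pairs of planes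
`xz = 0` in the spaces with coordinates `x, y_k, z`, which are split off one at a time by taking
`g = y_k`. The remaining piece `J : xz` is the conic `y² = xz` in the subspace where all `y_i` are
equal if `J = I`, and the double plane `y_n² = 0` in the space with coordinates `x, y_n, z` if
`J = in_<(I)`.

All these pieces lie in the pencil of conics `p xz + q y² = 0` in a three-space. For suitable `c`
the sequence `x + z, c xz + ∑ y_i²` is a system of parameters on all of them at once: its second
term restricts to a member of the pencil different from the given ones, and two different members
have no common component, even after setting `z = -x`.
-/

open RingTheory.Sequence Module

section ShortExact

lemma krullDim_union_le {α : Type*} [Preorder α] {s t : Set α} (hs : IsUpperSet s)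
    (ht : IsUpperSet t) :
    Order.krullDim ↥(s ∪ t) ≤ max (Order.krullDim s) (Order.krullDim t) := by
  refine iSup_le fun l ↦ ?_
  have length_le {u : Set α} (hu : IsUpperSet u) (h : (l.head : α) ∈ u) :
      (l.length : WithBot ℕ∞) ≤ Order.krullDim u :=
    Order.LTSeries.length_le_krullDim (⟨l.length,
      fun i ↦ ⟨l i, hu (l.monotone (Fin.zero_le i)) h⟩, l.step⟩ : LTSeries u)
  exact l.head.2.elim (fun h ↦ le_max_of_le_left (length_le hs h))
    fun h ↦ le_max_of_le_right (length_le ht h)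

variable {R M₁ M₂ M₃ : Type*} [CommRing R] [AddCommGroup M₁] [Module R M₁]
  [AddCommGroup M₂] [Module R M₂] [AddCommGroup M₃] [Module R M₃]
  {f : M₁ →ₗ[R] M₂} {g : M₂ →ₗ[R] M₃}

lemma isWeaklyRegular_of_exact {rs : List R} (hf : Function.Injective f)
    (hfg : Function.Exact f g) (hg : Function.Surjective g)
    (h₁ : IsWeaklyRegular M₁ rs) (h₃ : IsWeaklyRegular M₃ rs) : IsWeaklyRegular M₂ rs := by
  induction rs generalizing M₁ M₂ M₃ with
  | nil => exact .nil R M₂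
  | cons r rs ih =>
    rw [isWeaklyRegular_cons_iff] at h₁ h₃ ⊢
    have hf₀ : Function.Exact (0 : PUnit →ₗ[R] M₁) f :=
      (LinearMap.exact_zero_iff_injective PUnit f).2 hf
    have hf' : Function.Injective (QuotSMulTop.map r f) := by
      have := QuotSMulTop.map_first_exact_on_four_term_exact_of_isSMulRegular_last hf₀ hfg h₃.1
      rwa [map_zero, LinearMap.exact_zero_iff_injective] at this
    exact ⟨isSMulRegular_of_range_eq_ker hf (LinearMap.exact_iff.1 hfg).symm h₁.1 h₃.1,
      ih hf' (QuotSMulTop.map_exact r hfg hg) (QuotSMulTop.map_surjective r hg) h₁.2 h₃.2⟩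

lemma supportDim_le_max_of_exact (hf : Function.Injective f) (hfg : Function.Exact f g)
    (hg : Function.Surjective g) :
    supportDim R M₂ ≤ max (supportDim R M₁) (supportDim R M₃) := by
  rw [supportDim, support_of_exact hfg hf hg]
  exact krullDim_union_le (fun _ _ ↦ mem_support_mono) fun _ _ ↦ mem_support_mono

end ShortExact

section CMQuotient

variable {R : Type*} [CommRing R] {rs : List R}

/-- `R ⧸ J` is Cohen–Macaulay with system of parameters `rs`, expressed by conditions that also
hold for the zero ring: `rs` is weakly regular on `R ⧸ J` and has at least `dim R ⧸ J` terms. -/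
structure IsCMQuotient (rs : List R) (J : Ideal R) : Prop where
  isWeaklyRegular : IsWeaklyRegular (R ⧸ J) rs
  ringKrullDim_le : ringKrullDim (R ⧸ J) ≤ rs.length

lemma IsCMQuotient.isOka (rs : List R) : Ideal.IsOka (IsCMQuotient rs) where
  top := by
    refine ⟨⟨fun i h ↦ ?_⟩, by simp [ringKrullDim_eq_bot_of_subsingleton]⟩
    exact .of_right_eq_zero_of_smul fun _ _ ↦ Subsingleton.elim _ _
  oka {J g} hsup hcolon := by
    have colon_eq : J.colon (Ideal.span {g} : Set R) =
        Submodule.comap (LinearMap.toSpanSingleton R R g) J :=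
      Submodule.ext fun _ ↦ Ideal.mem_colon_span_singleton
    let φ : (R ⧸ J.colon (Ideal.span {g} : Set R)) →ₗ[R] R ⧸ J :=
      Submodule.mapQ _ J (LinearMap.toSpanSingleton R R g) colon_eq.le
    let ψ : (R ⧸ J) →ₗ[R] R ⧸ J ⊔ Ideal.span {g} := Submodule.factor le_sup_left
    have hφ : Function.Injective φ := by
      rw [← LinearMap.ker_eq_bot, Submodule.ker_mapQ, ← colon_eq, Submodule.mkQ_map_self]
    have hφψ : Function.Exact φ ψ := by
      rw [LinearMap.exact_iff, Submodule.range_mapQ, LinearMap.range_toSpanSingleton]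
      simp [ψ, Submodule.factor, Submodule.ker_mapQ]
    have hψ : Function.Surjective ψ := Submodule.factor_surjective _
    refine ⟨isWeaklyRegular_of_exact hφ hφψ hψ hcolon.1 hsup.1, ?_⟩
    have hdim := supportDim_le_max_of_exact hφ hφψ hψ
    simp only [supportDim_quotient_eq_ringKrullDim] at hdim
    exact hdim.trans (max_le hcolon.2 hsup.2)

variable {T : Type*} [CommRing T]

lemma IsCMQuotient.comap {π : R →+* T} (hπ : Function.Surjective π) {J : Ideal T}
    (h : IsCMQuotient (rs.map π) J) : IsCMQuotient rs (J.comap π) := by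
  let e : (R ⧸ J.comap π) ≃+* T ⧸ J := .ofBijective (Ideal.quotientMap J π le_rfl)
    ⟨Ideal.quotientMap_injective, Ideal.quotientMap_surjective hπ⟩
  refine ⟨?_, ?_⟩
  · refine (e.toAddEquiv.isWeaklyRegular_congr ?_).2 h.isWeaklyRegular
    refine List.forall₂_map_right_iff.2 (List.forall₂_same.2 fun r _ x ↦ ?_)
    obtain ⟨x, rfl⟩ := Ideal.Quotient.mk_surjective x
    exact congrArg (Ideal.Quotient.mk J) (map_mul π r x)
  · simpa only [ringKrullDim_eq_of_ringEquiv e, List.length_map] using h.ringKrullDim_le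

end CMQuotient

lemma supportDim_quotient_ofList_smul_top_add_length_le {R M : Type*} [CommRing R]
    [IsNoetherianRing R] [AddCommGroup M] [Module R M] [Module.Finite R M] {rs : List R}
    (h : IsWeaklyRegular M rs) :
    supportDim R (M ⧸ (Ideal.ofList rs • ⊤ : Submodule R M)) + rs.length ≤ supportDim R M := by
  induction rs generalizing M with
  | nil =>
    simpa using supportDim_le_of_surjective _ (Submodule.mkQ_surjective _)
  | cons r rs ih =>
    rw [isWeaklyRegular_cons_iff] at h
    rw [supportDim_eq_of_equiv (Submodule.quotOfListConsSMulTopEquivQuotSMulTopInner M r rs),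
      List.length_cons, Nat.cast_succ, ← add_assoc]
    exact (add_le_add_left (ih h.2) 1).trans
      (supportDim_quotSMulTop_succ_le_of_notMem_minimalPrimes
        fun _ ↦ h.1.notMem_of_mem_minimalPrimes)

lemma length_le_supportDim_of_isRegular {R M : Type*} [CommRing R] [IsNoetherianRing R]
    [AddCommGroup M] [Module R M] [Module.Finite R M] {rs : List R} (h : IsRegular M rs) :
    rs.length ≤ supportDim R M := by
  have := h.quot_ofList_smul_nontrivial ⊤
  have dim_nonneg : 0 ≤ supportDim R (M ⧸ (Ideal.ofList rs • ⊤ : Submodule R M)) :=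
    Order.krullDim_nonneg_iff.2 nonempty_support_of_nontrivial.to_subtype
  exact (le_add_of_nonneg_left dim_nonneg).trans
    (supportDim_quotient_ofList_smul_top_add_length_le h.toIsWeaklyRegular)

lemma isRegSeq_iff_isRegular {R : Type*} [CommRing R] {m : ℕ} {f : Fin m → R} :
    IsRegSeq f ↔ IsRegular R (List.ofFn f) := by
  have ofList_take (k : Fin m) :
      Ideal.ofList ((List.ofFn f).take k) = Ideal.span (f '' {j | j < k}) := by
    refine congrArg Ideal.span (Set.ext fun r ↦ ?_)
    simp only [Set.mem_ofPred_eq, List.mem_take_iff_getElem, List.getElem_ofFn, Set.mem_image,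
      Fin.exists_iff, Fin.lt_def, lt_inf_iff, List.length_ofFn]
    exact exists_congr fun j ↦ ⟨fun ⟨h, e⟩ ↦ ⟨h.2, h.1, e⟩, fun ⟨h, h', e⟩ ↦ ⟨⟨h', h⟩, e⟩⟩
  have ofList_ofFn : Ideal.ofList (List.ofFn f) = Ideal.span (Set.range f) :=
    congrArg Ideal.span (Set.ext fun r ↦ List.mem_ofFn' f r)
  rw [IsRegSeq, RingTheory.Sequence.isRegular_iff, isWeaklyRegular_iff_Fin, smul_eq_mul,
    Ideal.mul_top, ofList_ofFn, ne_comm,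
    ← (finCongr List.length_ofFn).symm.forall_congr_right]
  refine and_congr_left' (forall_congr' fun k ↦ ?_)
  rw [isSMulRegular_quotient_iff_mem_of_smul_mem]
  simp [ofList_take]

lemma X_mem_idealOfVars {σ R : Type*} [CommSemiring R] (i : σ) :
    (X i : MvPolynomial σ R) ∈ idealOfVars σ R :=
  Ideal.subset_span ⟨i, rfl⟩

lemma idealOfVars_ne_top (σ R : Type*) [CommRing R] [Nontrivial R] : idealOfVars σ R ≠ ⊤ := by
  have le_ker : idealOfVars σ R ≤ RingHom.ker (constantCoeff (σ := σ) (R := R)) :=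
    Ideal.span_le.2 (Set.range_subset_iff.2 fun i ↦ constantCoeff_X R i)
  exact fun h ↦ RingHom.ker_ne_top _ (top_le_iff.1 (h ▸ le_ker))

lemma IsCMQuotient.isCMofDim {K σ : Type*} [Field K] [Finite σ] {m : ℕ}
    {f : Fin m → MvPolynomial σ K} {J : Ideal (MvPolynomial σ K)}
    (h : IsCMQuotient (List.ofFn f) J) (hf : ∀ i, f i ∈ idealOfVars σ K)
    (hJ : J ≤ idealOfVars σ K) : IsCMofDim J m := by
  have hreg : IsRegular (MvPolynomial σ K ⧸ J) (List.ofFn f) := by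
    refine ⟨h.isWeaklyRegular, fun htop ↦ idealOfVars_ne_top σ K ?_⟩
    have one_mem : Ideal.Quotient.mk J 1 ∈
        (Ideal.ofList (List.ofFn f)).map (Ideal.Quotient.mk J) := by
      rw [Ideal.smul_top_eq_map] at htop
      exact htop.le trivial
    rw [Ideal.mem_quotient_iff_mem_sup] at one_mem
    refine (Ideal.eq_top_iff_one _).2 (sup_le ?_ hJ one_mem)
    simpa [Ideal.ofList, Ideal.span_le, Set.subset_def] using hf
  refine ⟨le_antisymm ?_ ?_, Ideal.Quotient.mk J ∘ f,
    fun i ↦ Ideal.mem_map_of_mem _ (hf i), ?_⟩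
  · simpa using h.ringKrullDim_le
  · simpa [supportDim_quotient_eq_ringKrullDim] using length_le_supportDim_of_isRegular hreg
  · rw [isRegSeq_iff_isRegular, ← List.map_ofFn]
    refine ((AddEquiv.refl _).isRegular_congr (List.forall₂_map_right_iff.2 ?_)).1 hreg
    exact List.forall₂_same.2 fun _ _ _ ↦ rfl

section Hypersurface

variable {R : Type*} [CommRing R]

open scoped Pointwise in
lemma isWeaklyRegular_quotient_cons {J : Ideal R} {a : R} {rs : List R}
    (ha : IsSMulRegular (R ⧸ J) a) (hrs : IsWeaklyRegular (R ⧸ J ⊔ Ideal.span {a}) rs) :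
    IsWeaklyRegular (R ⧸ J) (a :: rs) := by
  have smul_top : a • (⊤ : Submodule R (R ⧸ J)) = Submodule.map J.mkQ (Ideal.span {a}) := by
    rw [← Submodule.ideal_span_singleton_smul, ← J.range_mkQ, ← Submodule.map_top,
      ← Submodule.map_smul'', smul_eq_mul, Ideal.mul_top]
  let e : QuotSMulTop a (R ⧸ J) ≃ₗ[R] R ⧸ J ⊔ Ideal.span {a} :=
    Submodule.quotEquivOfEq _ _ smul_top ≪≫ₗ Submodule.quotientQuotientEquivQuotientSup J _
  exact .cons ha ((e.isWeaklyRegular_congr rs).2 hrs)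

lemma isSMulRegular_quotient_span_of_isRelPrime [DecompositionMonoid R] {h b : R}
    (hb : IsRelPrime h b) : IsSMulRegular (R ⧸ Ideal.span {h}) b := by
  simp only [isSMulRegular_quotient_iff_mem_of_smul_mem, Ideal.mem_span_singleton, smul_eq_mul]
  exact fun _ ↦ hb.dvd_of_dvd_mul_left

lemma isSMulRegular_quotient_comap {T : Type*} [CommRing T] {J : Ideal T} {π : R →+* T} {b : R}
    (hb : IsSMulRegular (T ⧸ J) (π b)) : IsSMulRegular (R ⧸ J.comap π) b := by
  rw [isSMulRegular_quotient_iff_mem_of_smul_mem] at hb ⊢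
  intro s hs
  exact hb (π s) (by simpa using hs)

lemma span_sup_span_X_sub_C (h : Polynomial R) (r : R) :
    Ideal.span {h} ⊔ Ideal.span {Polynomial.X - Polynomial.C r} =
      (Ideal.span {h.eval r}).comap (Polynomial.evalRingHom r) := by
  rw [← Polynomial.ker_evalRingHom, ← Polynomial.coe_evalRingHom, ← Set.image_singleton,
    ← Ideal.map_span, Ideal.comap_map_of_surjective' _ fun c ↦ ⟨.C c, Polynomial.eval_C⟩]

lemma isWeaklyRegular_polynomial_quotient_span [IsDomain R] [UniqueFactorizationMonoid R]
    {h b : Polynomial R} {r : R} (hr : h.eval r ≠ 0) (hb : IsRelPrime (h.eval r) (b.eval r)) :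
    IsWeaklyRegular (Polynomial R ⧸ Ideal.span {h}) [Polynomial.X - Polynomial.C r, b] := by
  have relPrime : IsRelPrime h (Polynomial.X - Polynomial.C r) := by
    refine ((Polynomial.prime_X_sub_C r).irreducible.isRelPrime_iff_not_dvd.2 ?_).symm
    rwa [Polynomial.dvd_iff_isRoot]
  refine isWeaklyRegular_quotient_cons (isSMulRegular_quotient_span_of_isRelPrime relPrime) ?_
  rw [span_sup_span_X_sub_C, isWeaklyRegular_singleton_iff]
  exact isSMulRegular_quotient_comap (isSMulRegular_quotient_span_of_isRelPrime hb)

lemma ringKrullDim_polynomial_quotient_span_le [IsNoetherianRing R] [IsDomain R]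
    {h : Polynomial R} (h0 : h ≠ 0) :
    ringKrullDim (Polynomial R ⧸ Ideal.span {h}) ≤ ringKrullDim R := by
  have := ringKrullDim_quotient_succ_le_of_nonZeroDivisor (mem_nonZeroDivisors_of_ne_zero h0)
  rw [Polynomial.ringKrullDim_of_isNoetherianRing] at this
  exact ENat.WithBot.add_le_add_one_right_iff.1 this

end Hypersurface

section Coprimality

lemma isRelPrime_smul_add_smul {K R : Type*} [Field K] [CommRing R] [Algebra K R] {u v : R}
    (h : IsRelPrime u v) {p q r s : K} (hpq : p * s ≠ q * r) :
    IsRelPrime (p • u + q • v) (r • u + s • v) := by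
  have hdet : p * s - q * r ≠ 0 := sub_ne_zero.2 hpq
  have hu : u = (p * s - q * r)⁻¹ • (s • (p • u + q • v) - q • (r • u + s • v)) := by
    rw [eq_inv_smul_iff₀ hdet]
    module
  have hv : v = (p * s - q * r)⁻¹ • (p • (r • u + s • v) - r • (p • u + q • v)) := by
    rw [eq_inv_smul_iff₀ hdet]
    module
  intro d hd hd'
  refine h ?_ ?_
  · rw [hu]
    exact dvd_smul_of_dvd _ (dvd_sub (dvd_smul_of_dvd _ hd) (dvd_smul_of_dvd _ hd'))
  · rw [hv]
    exact dvd_smul_of_dvd _ (dvd_sub (dvd_smul_of_dvd _ hd') (dvd_smul_of_dvd _ hd))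

lemma isRelPrime_X_of_ne {σ R : Type*} [CommRing R] [IsDomain R] {i j : σ} (h : i ≠ j) :
    IsRelPrime (X i : MvPolynomial σ R) (X j) := by
  rwa [X_prime.irreducible.isRelPrime_iff_not_dvd, X_dvd_X]

end Coprimality

section Pencil

/-- The ring `K[x, y, z]`, encoded as `K[x, y][z]` so that `x + z` is a monic polynomial of degree
one over a factorial ring of dimension two. -/
abbrev XYZ (K : Type*) [Field K] := Polynomial (MvPolynomial (Fin 2) K)

namespace XYZ

variable (K : Type*) [Field K]

/-- The coordinate `x` of `K[x, y, z]`. -/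
noncomputable def x : XYZ K := Polynomial.C (X 0)

/-- The coordinate `y` of `K[x, y, z]`. -/
noncomputable def y : XYZ K := Polynomial.C (X 1)

/-- The coordinate `z` of `K[x, y, z]`. -/
noncomputable def z : XYZ K := Polynomial.X

variable {K}

/-- The members of the pencil of conics spanned by `xz` and `y²`. -/
noncomputable def pencil (p q : K) : XYZ K := p • (x K * z K) + q • y K ^ 2

lemma algHom_ext {A : Type*} [CommSemiring A] [Algebra K A] {f g : XYZ K →ₐ[K] A}
    (hx : f (x K) = g (x K)) (hy : f (y K) = g (y K)) (hz : f (z K) = g (z K)) : f = g := by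
  refine Polynomial.algHom_ext' (MvPolynomial.algHom_ext fun i ↦ ?_) hz
  fin_cases i
  exacts [hx, hy]

lemma x_add_z : x K + z K = Polynomial.X - Polynomial.C (-X 0) := by
  simp [x, z, add_comm]

variable (K) in
lemma isRelPrime_x_mul_z_y : IsRelPrime (x K * z K) (y K) := by
  have prime_y : Prime (y K) := Polynomial.prime_C_iff.2 X_prime
  refine (prime_y.irreducible.isRelPrime_iff_not_dvd.2 fun h ↦ ?_).symm
  have := (Polynomial.C_dvd_iff_dvd_coeff _ _).1 h 1
  simp [x, z, X_dvd_X] at this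

lemma isRelPrime_x_mul_z_pencil {p q : K} (hq : q ≠ 0) : IsRelPrime (x K * z K) (pencil p q) := by
  have := isRelPrime_smul_add_smul (p := 1) (q := 0) (r := p) (s := q)
    ((isRelPrime_x_mul_z_y K).pow_right (n := 2)) (by simpa using hq)
  simpa [pencil] using this

lemma isCMQuotient_span_pencil {p q r s : K} (h : p * s ≠ q * r) :
    IsCMQuotient [x K + z K, pencil r s] (Ideal.span {pencil p q}) := by
  have eval_pencil (p q : K) : (pencil p q).eval (-X 0) = p • (-X 0 ^ 2) + q • X 1 ^ 2 := by
    simp [pencil, x, y, z, Polynomial.eval_smul, sq]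
  have relPrime : IsRelPrime ((pencil p q).eval (-X 0)) ((pencil r s).eval (-X 0)) := by
    rw [eval_pencil, eval_pencil]
    exact isRelPrime_smul_add_smul (isRelPrime_X_of_ne Fin.zero_ne_one).pow.neg_left h
  have eval_ne_zero : (pencil p q).eval (-X 0) ≠ 0 := by
    intro h0
    have hp : p = 0 := by simpa [eval_pencil] using congrArg (eval ![1, 0]) h0
    have hq : q = 0 := by simpa [eval_pencil] using congrArg (eval ![0, 1]) h0
    simp [hp, hq] at h
  have pencil_ne_zero : pencil p q ≠ 0 := fun h0 ↦ eval_ne_zero (by rw [h0, Polynomial.eval_zero])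
  refine ⟨?_, ?_⟩
  · rw [x_add_z]
    exact isWeaklyRegular_polynomial_quotient_span eval_ne_zero relPrime
  · refine (ringKrullDim_polynomial_quotient_span_le pencil_ne_zero).trans_eq ?_
    simp [MvPolynomial.ringKrullDim_of_isNoetherianRing]

end XYZ

end Pencil

section Slice

open XYZ

variable {K : Type*} [Field K] {n : ℕ}

/-- The restriction of polynomials to the linear subspace `y_i = v_i y`, with coordinates
`x, y, z`. -/
noncomputable def slice (v : Fin n → K) : MvPolynomial (Fin (n + 2)) K →ₐ[K] XYZ K :=
  aeval (Fin.snoc (Fin.cons (x K) fun i ↦ v i • y K) (z K) : Fin (n + 2) → XYZ K)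

/-- The inclusion `K[x, y_k, z] ⊆ S`, a section of `slice v` whenever `v_k = 1`. -/
noncomputable def sliceSection (k : Fin n) : XYZ K →ₐ[K] MvPolynomial (Fin (n + 2)) K :=
  Polynomial.eval₂AlgHom (aeval ![xP K n, yP K n k]) (zP K n) fun _ ↦ Commute.all _ _

variable (v : Fin n → K) (k : Fin n)

@[simp] lemma slice_xP : slice v (xP K n) = x K := by
  simp [slice, xP]

@[simp] lemma slice_yP (i : Fin n) : slice v (yP K n i) = v i • y K := by
  simp [slice, yP, -Fin.castSucc_succ]

@[simp] lemma slice_zP : slice v (zP K n) = z K := by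
  simp [slice, zP]

@[simp] lemma sliceSection_x : sliceSection k (x K) = xP K n := by
  simp [sliceSection, x]

@[simp] lemma sliceSection_y : sliceSection k (y K) = yP K n k := by
  simp [sliceSection, y]

@[simp] lemma sliceSection_z : sliceSection k (z K) = zP K n := by
  simp [sliceSection, z]

variable {v k}

lemma diamond_algHom_ext {A : Type*} [CommSemiring A] [Algebra K A]
    {f g : MvPolynomial (Fin (n + 2)) K →ₐ[K] A} (hx : f (xP K n) = g (xP K n))
    (hy : ∀ i, f (yP K n i) = g (yP K n i)) (hz : f (zP K n) = g (zP K n)) : f = g :=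
  MvPolynomial.algHom_ext (Fin.lastCases hz (Fin.cases hx hy))

lemma slice_surjective (hk : v k = 1) : Function.Surjective (slice v) := by
  have slice_comp_sliceSection : (slice v).comp (sliceSection k) = AlgHom.id K (XYZ K) :=
    XYZ.algHom_ext (by simp) (by simp [hk]) (by simp)
  exact fun t ↦ ⟨sliceSection k t, DFunLike.congr_fun slice_comp_sliceSection t⟩

lemma sub_sliceSection_slice_mem {L : Ideal (MvPolynomial (Fin (n + 2)) K)}
    (hL : ∀ i, yP K n i - v i • yP K n k ∈ L) (s : MvPolynomial (Fin (n + 2)) K) :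
    s - sliceSection k (slice v s) ∈ L := by
  have mk_eq : Ideal.Quotient.mkₐ K L =
      (Ideal.Quotient.mkₐ K L).comp ((sliceSection k).comp (slice v)) :=
    diamond_algHom_ext (by simp)
      (fun i ↦ by simpa using (Ideal.Quotient.mk_eq_mk_iff_sub_mem _ _).2 (hL i)) (by simp)
  exact (Ideal.Quotient.mk_eq_mk_iff_sub_mem _ _).1 (DFunLike.congr_fun mk_eq s)

lemma comap_slice_span_le {L : Ideal (MvPolynomial (Fin (n + 2)) K)} {h : XYZ K}
    (hL : ∀ i, yP K n i - v i • yP K n k ∈ L) (hh : sliceSection k h ∈ L) :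
    (Ideal.span {h}).comap (slice v) ≤ L := by
  intro s hs
  obtain ⟨c, hc⟩ := Ideal.mem_span_singleton.1 (Ideal.mem_comap.1 hs)
  have := sub_sliceSection_slice_mem hL s
  rw [hc, map_mul] at this
  exact (Submodule.sub_mem_iff_left _ (L.mul_mem_right _ hh)).1 this

lemma colon_span_eq_comap_slice {J : Ideal (MvPolynomial (Fin (n + 2)) K)}
    {g : MvPolynomial (Fin (n + 2)) K} {h : XYZ K} (hJ : J ≤ (Ideal.span {h}).comap (slice v))
    (hg : IsRelPrime (slice v g) h) (hy : ∀ i, g * (yP K n i - v i • yP K n k) ∈ J)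
    (hh : g * sliceSection k h ∈ J) :
    J.colon (Ideal.span {g} : Set (MvPolynomial (Fin (n + 2)) K)) =
      (Ideal.span {h}).comap (slice v) := by
  simp only [Ideal.span, Submodule.colon_span]
  refine le_antisymm (fun s hs ↦ ?_) (comap_slice_span_le (k := k) (fun i ↦ ?_) ?_)
  · have := hJ (Submodule.mem_colon_singleton.1 hs)
    simp only [smul_eq_mul, Ideal.mem_comap, map_mul, Ideal.mem_span_singleton] at this ⊢
    exact hg.symm.dvd_of_dvd_mul_right this
  · simpa [Submodule.mem_colon_singleton, mul_comm] using hy i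
  · simpa [Submodule.mem_colon_singleton, mul_comm] using hh

/-- The system of parameters `x + z, c xz + ∑ y_i²`: its second term restricts to a member of the
pencil of conics on every slice, and `c` makes that member avoid a given one. -/
noncomputable def parameters (K : Type*) [Field K] (n : ℕ) (c : K) :
    Fin 2 → MvPolynomial (Fin (n + 2)) K :=
  ![xP K n + zP K n, c • (xP K n * zP K n) + ∑ i, yP K n i ^ 2]

lemma map_slice_parameters (v : Fin n → K) (c : K) :
    (List.ofFn (parameters K n c)).map (slice v : MvPolynomial (Fin (n + 2)) K →+* XYZ K) =
      [x K + z K, pencil c (∑ i, v i ^ 2)] := by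
  simp [parameters, pencil, smul_pow, Finset.sum_smul]

/-- The colon ideal `J : g` is the pullback of a conic under a slice, whence only `J + (g)` remains
to be analysed. -/
lemma IsCMQuotient.of_sup_span {J : Ideal (MvPolynomial (Fin (n + 2)) K)}
    {g : MvPolynomial (Fin (n + 2)) K} {c p q : K} (hk : v k = 1)
    (hc : p * ∑ i, v i ^ 2 ≠ q * c) (hJ : J ≤ (Ideal.span {pencil p q}).comap (slice v))
    (hg : IsRelPrime (slice v g) (pencil p q))
    (hy : ∀ i, g * (yP K n i - v i • yP K n k) ∈ J) (hh : g * sliceSection k (pencil p q) ∈ J)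
    (hsup : IsCMQuotient (List.ofFn (parameters K n c)) (J ⊔ Ideal.span {g})) :
    IsCMQuotient (List.ofFn (parameters K n c)) J := by
  refine (IsCMQuotient.isOka _).oka hsup ?_
  rw [colon_span_eq_comap_slice hJ hg hy hh]
  refine IsCMQuotient.comap (π := (slice v : MvPolynomial (Fin (n + 2)) K →+* XYZ K))
    (slice_surjective hk) ?_
  rw [map_slice_parameters]
  exact isCMQuotient_span_pencil hc

end Slice

section Axes

open XYZ

variable {K : Type*} [Field K] {n : ℕ}

/-- For `B ≠ ∅`, the ideal of the union of the coordinate planes spanned by the `x`- and `y_k`-axes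
or by the `z`- and `y_k`-axes, `k ∈ B`. -/
noncomputable def axesIdeal (K : Type*) [Field K] {n : ℕ} (B : Finset (Fin n)) :
    Ideal (MvPolynomial (Fin (n + 2)) K) :=
  Ideal.span ({f | ∃ i j : Fin n, i ≠ j ∧ f = yP K n i * yP K n j} ∪ {xP K n * zP K n} ∪
    yP K n '' {i | i ∉ B})

variable {B : Finset (Fin n)} {i j k : Fin n}

lemma single_mul_single_of_ne {ι R : Type*} [DecidableEq ι] [MulZeroClass R] {i j k : ι}
    (h : i ≠ j) (a b : R) :
    (Pi.single k a : ι → R) i * (Pi.single k b : ι → R) j = 0 := by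
  rcases eq_or_ne i k with rfl | hi
  · rw [Pi.single_eq_of_ne h.symm, mul_zero]
  · rw [Pi.single_eq_of_ne hi, zero_mul]

lemma xP_mul_zP_mem_axesIdeal (B : Finset (Fin n)) : xP K n * zP K n ∈ axesIdeal K B :=
  Ideal.subset_span (.inl (.inr rfl))

lemma yP_mem_axesIdeal (hi : i ∉ B) : yP K n i ∈ axesIdeal K B :=
  Ideal.subset_span (.inr ⟨i, hi, rfl⟩)

lemma yP_mul_yP_mem_axesIdeal (B : Finset (Fin n)) (h : i ≠ j) :
    yP K n i * yP K n j ∈ axesIdeal K B :=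
  Ideal.subset_span (.inl (.inl ⟨i, j, h, rfl⟩))

lemma axesIdeal_cons_sup_span (hk : k ∉ B) :
    axesIdeal K (B.cons k hk) ⊔ Ideal.span {yP K n k} = axesIdeal K B := by
  have image_eq : yP K n '' {i | i ∉ B.cons k hk} ∪ {yP K n k} = yP K n '' {i | i ∉ B} := by
    rw [← Set.image_singleton, ← Set.image_union]
    congr 1
    ext i
    simp only [Finset.mem_cons, Set.mem_union, Set.mem_ofPred_eq, Set.mem_singleton_iff]
    grind
  rw [axesIdeal, ← Ideal.span_union, Set.union_assoc, image_eq, axesIdeal]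

lemma axesIdeal_le_comap_slice_single (hk : k ∈ B) :
    axesIdeal K B ≤ (Ideal.span {pencil 1 0}).comap (slice (Pi.single k 1 : Fin n → K)) := by
  rw [axesIdeal, Ideal.span_le]
  rintro _ ((⟨i, j, hij, rfl⟩ | rfl) | ⟨i, hi, rfl⟩)
  · simp [smul_smul, single_mul_single_of_ne hij.symm (1 : K) 1]
  · simp [pencil]
  · simp [Pi.single_eq_of_ne (ne_of_mem_of_not_mem hk hi).symm]

lemma isCMQuotient_axesIdeal_of_sup {g : MvPolynomial (Fin (n + 2)) K} (c : K) (hk : k ∈ B)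
    (hg : IsRelPrime (slice (Pi.single k 1) g) (x K * z K))
    (hy : ∀ i ≠ k, g * yP K n i ∈ axesIdeal K B)
    (hsup : IsCMQuotient (List.ofFn (parameters K n c)) (axesIdeal K B ⊔ Ideal.span {g})) :
    IsCMQuotient (List.ofFn (parameters K n c)) (axesIdeal K B) := by
  refine .of_sup_span (v := Pi.single k 1) (k := k) (p := 1) (q := 0) (by simp)
    (by simp [Pi.single_apply, ite_pow]) (axesIdeal_le_comap_slice_single hk)
    (by simpa [pencil] using hg) (fun i ↦ ?_) ?_ hsup
  · rcases eq_or_ne i k with rfl | hi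
    · simp
    · simpa [hi] using hy i hi
  · simpa [pencil] using Ideal.mul_mem_left _ g (xP_mul_zP_mem_axesIdeal B)

lemma isCMQuotient_axesIdeal (c : K) (hB : B.Nonempty) :
    IsCMQuotient (List.ofFn (parameters K n c)) (axesIdeal K B) := by
  induction hB using Finset.Nonempty.cons_induction with
  | singleton k =>
    refine isCMQuotient_axesIdeal_of_sup (g := 1) c (Finset.mem_singleton_self k)
      (by simpa using isRelPrime_one_left) (fun i hi ↦ ?_) ?_
    · simpa using yP_mem_axesIdeal (by simpa using hi)
    · simpa using (IsCMQuotient.isOka _).top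
  | cons k B hk _ ih =>
    refine isCMQuotient_axesIdeal_of_sup (g := yP K n k) c (Finset.mem_cons_self k B)
      (by simpa using (isRelPrime_x_mul_z_y K).symm)
      (fun i hi ↦ yP_mul_yP_mem_axesIdeal _ hi.symm) ?_
    rwa [axesIdeal_cons_sup_span]

lemma axesIdeal_univ_le_idealOfVars :
    axesIdeal K (Finset.univ : Finset (Fin n)) ≤ idealOfVars (Fin (n + 2)) K := by
  rw [axesIdeal, Ideal.span_le]
  rintro _ ((⟨i, j, -, rfl⟩ | rfl) | ⟨i, hi, rfl⟩)
  · exact Ideal.mul_mem_right _ _ (X_mem_idealOfVars _)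
  · exact Ideal.mul_mem_right _ _ (X_mem_idealOfVars _)
  · exact absurd (Finset.mem_univ i) hi

lemma parameters_mem_idealOfVars (c : K) (i : Fin 2) :
    parameters K n c i ∈ idealOfVars (Fin (n + 2)) K := by
  fin_cases i
  · exact add_mem (X_mem_idealOfVars _) (X_mem_idealOfVars _)
  · exact add_mem (Submodule.smul_of_tower_mem _ c (Ideal.mul_mem_right _ _ (X_mem_idealOfVars _)))
      (sum_mem fun i _ ↦ Ideal.pow_mem_of_mem _ (X_mem_idealOfVars _) 2 two_pos)

lemma isCMofDim_of_sup_eq_axesIdeal {J : Ideal (MvPolynomial (Fin (n + 2)) K)} {v : Fin n → K}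
    {p q : K} (hk : v k = 1) (hq : q ≠ 0) (hJ : J ≤ (Ideal.span {pencil p q}).comap (slice v))
    (hy : ∀ i, xP K n * zP K n * (yP K n i - v i • yP K n k) ∈ J)
    (hh : xP K n * zP K n * sliceSection k (pencil p q) ∈ J)
    (hsup : J ⊔ Ideal.span {xP K n * zP K n} = axesIdeal K Finset.univ) : IsCMofDim J 2 := by
  obtain ⟨c, hc⟩ : ∃ c, p * ∑ i, v i ^ 2 ≠ q * c :=
    ⟨(p * ∑ i, v i ^ 2 - 1) / q, by simp [mul_div_cancel₀ _ hq, eq_sub_iff_add_eq]⟩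
  have axes_good : IsCMQuotient (List.ofFn (parameters K n c)) (axesIdeal K Finset.univ) :=
    isCMQuotient_axesIdeal c ⟨k, Finset.mem_univ k⟩
  have J_good : IsCMQuotient (List.ofFn (parameters K n c)) J :=
    .of_sup_span hk hc hJ (by simpa using isRelPrime_x_mul_z_pencil hq) hy hh (hsup ▸ axes_good)
  exact J_good.isCMofDim (parameters_mem_idealOfVars c)
    ((hsup ▸ le_sup_left).trans axesIdeal_univ_le_idealOfVars)

end Axes

section Diamond

open XYZ

variable {K : Type*} [Field K] {n : ℕ}

lemma yP_mul_yP_sub_mem_diamondIdeal {i j : Fin n} (h : i ≠ j) :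
    yP K n i * yP K n j - xP K n * zP K n ∈ diamondIdeal K n := by
  rcases h.lt_or_gt with h | h
  · exact Ideal.subset_span ⟨i, j, h, rfl⟩
  · exact Ideal.subset_span ⟨j, i, h, by ring⟩

lemma diamondIdeal_le_comap_slice_one :
    diamondIdeal K n ≤ (Ideal.span {pencil (-1) 1}).comap (slice (1 : Fin n → K)) := by
  rw [diamondIdeal, Ideal.span_le]
  rintro _ ⟨i, j, -, rfl⟩
  simp only [SetLike.mem_coe, Ideal.mem_comap, map_sub, map_mul, slice_xP, slice_yP, slice_zP,
    Pi.one_apply, one_smul]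
  exact Ideal.subset_span (by simp [pencil, sq, neg_add_eq_sub])

lemma xP_mul_zP_mul_sub_mem_diamondIdeal {i j l : Fin n} (hi : i ≠ l) (hj : j ≠ l) :
    xP K n * zP K n * (yP K n i - yP K n j) ∈ diamondIdeal K n := by
  have := sub_mem (Ideal.mul_mem_left _ (yP K n j) (yP_mul_yP_sub_mem_diamondIdeal (K := K) hi))
    (Ideal.mul_mem_left _ (yP K n i) (yP_mul_yP_sub_mem_diamondIdeal hj))
  convert this using 1
  ring

lemma xP_mul_zP_mul_sq_sub_mem_diamondIdeal {i j l : Fin n} (hij : i ≠ j) (hil : i ≠ l)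
    (hjl : j ≠ l) :
    xP K n * zP K n * (yP K n i ^ 2 - xP K n * zP K n) ∈ diamondIdeal K n := by
  have := add_mem
    (Ideal.mul_mem_left _ (yP K n i) (xP_mul_zP_mul_sub_mem_diamondIdeal (K := K) hil hjl))
    (Ideal.mul_mem_left _ (xP K n * zP K n) (yP_mul_yP_sub_mem_diamondIdeal hij))
  convert this using 1
  ring

lemma diamondIdeal_sup_span :
    diamondIdeal K n ⊔ Ideal.span {xP K n * zP K n} = axesIdeal K Finset.univ := by
  have xz_mem : xP K n * zP K n ∈ diamondIdeal K n ⊔ Ideal.span {xP K n * zP K n} :=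
    Ideal.mem_sup_right (Ideal.mem_span_singleton_self _)
  refine le_antisymm (sup_le ?_ ?_) ?_
  · rw [diamondIdeal, Ideal.span_le]
    rintro _ ⟨i, j, hij, rfl⟩
    exact sub_mem (yP_mul_yP_mem_axesIdeal _ hij.ne) (xP_mul_zP_mem_axesIdeal _)
  · exact (Ideal.span_singleton_le_iff_mem _).2 (xP_mul_zP_mem_axesIdeal _)
  · rw [axesIdeal, Ideal.span_le]
    rintro _ ((⟨i, j, hij, rfl⟩ | rfl) | ⟨i, hi, rfl⟩)
    · exact (Submodule.sub_mem_iff_left _ xz_mem).1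
        (Ideal.mem_sup_left (yP_mul_yP_sub_mem_diamondIdeal hij))
    · exact xz_mem
    · exact absurd (Finset.mem_univ i) hi

lemma isCMofDim_diamondIdeal (hn : 3 ≤ n) : IsCMofDim (diamondIdeal K n) 2 := by
  have exists_third (i j : Fin n) : ∃ l, i ≠ l ∧ j ≠ l := by
    obtain ⟨l, hl⟩ := Finset.exists_mem_notMem_of_card_lt_card
      (s := {i, j}) (t := Finset.univ)
      (Finset.card_le_two.trans_lt (by rwa [Finset.card_fin]))
    exact ⟨l, by simpa [eq_comm] using hl⟩
  let k : Fin n := ⟨0, by omega⟩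
  refine isCMofDim_of_sup_eq_axesIdeal (k := k) (v := 1) (p := -1) (q := 1) rfl one_ne_zero
    diamondIdeal_le_comap_slice_one (fun i ↦ ?_) ?_ diamondIdeal_sup_span
  · obtain ⟨l, hi, hk⟩ := exists_third i k
    simpa using xP_mul_zP_mul_sub_mem_diamondIdeal hi hk
  · obtain ⟨j, hj, -⟩ := exists_third k k
    obtain ⟨l, hkl, hjl⟩ := exists_third k j
    simpa [pencil, neg_add_eq_sub] using xP_mul_zP_mul_sq_sub_mem_diamondIdeal hj hkl hjl

end Diamond

section DiamondIni

open XYZ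

variable {K : Type*} [Field K] {n : ℕ} {hn : 1 ≤ n}

lemma yP_mul_yP_mem_diamondIni {i j : Fin n} (h : i ≠ j) :
    yP K n i * yP K n j ∈ diamondIni K n hn := by
  rcases h.lt_or_gt with h | h
  · exact Ideal.subset_span (.inl (.inl ⟨i, j, h, rfl⟩))
  · exact Ideal.subset_span (.inl (.inl ⟨j, i, h, mul_comm _ _⟩))

lemma xP_mul_zP_mul_yP_mem_diamondIni {i : Fin n} (hi : i ≠ ⟨n - 1, by omega⟩) :
    xP K n * zP K n * yP K n i ∈ diamondIni K n hn := by
  have : (i : ℕ) ≠ n - 1 := fun h ↦ hi (Fin.ext h)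
  exact Ideal.subset_span (.inl (.inr ⟨i, by omega, mul_right_comm _ _ _⟩))

lemma xP_mul_zP_mul_yP_sq_mem_diamondIni :
    xP K n * zP K n * yP K n ⟨n - 1, by omega⟩ ^ 2 ∈ diamondIni K n hn :=
  Ideal.subset_span (.inr (mul_right_comm _ _ _))

lemma diamondIni_le_comap_slice_single :
    diamondIni K n hn ≤
      (Ideal.span {pencil 0 1}).comap (slice (Pi.single ⟨n - 1, by omega⟩ 1 : Fin n → K)) := by
  rw [diamondIni, Ideal.span_le]
  rintro _ ((⟨i, j, hij, rfl⟩ | ⟨k, hk, rfl⟩) | rfl)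
  · simp [smul_smul, single_mul_single_of_ne hij.ne' (1 : K) 1]
  · have : k ≠ ⟨n - 1, by omega⟩ := Fin.ne_of_val_ne hk.ne
    simp [this]
  · simp only [SetLike.mem_coe, Ideal.mem_comap, Ideal.mem_span_singleton, map_mul, map_pow,
      slice_xP, slice_yP, slice_zP, Pi.single_eq_same, pencil, one_smul, zero_smul, zero_add]
    exact (dvd_mul_left _ _).mul_right _

lemma diamondIni_sup_span :
    diamondIni K n hn ⊔ Ideal.span {xP K n * zP K n} = axesIdeal K Finset.univ := by
  have xz_mem := xP_mul_zP_mem_axesIdeal (K := K) (Finset.univ : Finset (Fin n))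
  refine le_antisymm (sup_le ?_ ?_) ?_
  · rw [diamondIni, Ideal.span_le]
    rintro _ ((⟨i, j, hij, rfl⟩ | ⟨k, -, rfl⟩) | rfl)
    · exact yP_mul_yP_mem_axesIdeal _ hij.ne
    · rw [SetLike.mem_coe, mul_right_comm]
      exact Ideal.mul_mem_right _ _ xz_mem
    · rw [SetLike.mem_coe, mul_right_comm]
      exact Ideal.mul_mem_right _ _ xz_mem
  · exact (Ideal.span_singleton_le_iff_mem _).2 xz_mem
  · rw [axesIdeal, Ideal.span_le]
    rintro _ ((⟨i, j, hij, rfl⟩ | rfl) | ⟨i, hi, rfl⟩)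
    · exact Ideal.mem_sup_left (yP_mul_yP_mem_diamondIni hij)
    · exact Ideal.mem_sup_right (Ideal.mem_span_singleton_self _)
    · exact absurd (Finset.mem_univ i) hi

lemma isCMofDim_diamondIni : IsCMofDim (diamondIni K n hn) 2 := by
  refine isCMofDim_of_sup_eq_axesIdeal (k := ⟨n - 1, by omega⟩) (v := Pi.single ⟨n - 1, by omega⟩ 1)
    (p := 0) (q := 1) (by simp) one_ne_zero diamondIni_le_comap_slice_single (fun i ↦ ?_) ?_
    diamondIni_sup_span
  · rcases eq_or_ne i ⟨n - 1, by omega⟩ with rfl | hi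
    · simp
    · simpa [hi] using xP_mul_zP_mul_yP_mem_diamondIni hi
  · simpa [pencil] using xP_mul_zP_mul_yP_sq_mem_diamondIni

end DiamondIni

theorem diamond_CM_of_dim_two (K : Type*) [Field K] (n : ℕ) (hn : 3 ≤ n) :
    IsCMofDim (diamondIdeal K n) 2 ∧ IsCMofDim (diamondIni K n (by omega)) 2 :=
  ⟨isCMofDim_diamondIdeal hn, isCMofDim_diamondIni⟩
end
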